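/- Let 𝔞 be a cofinite monomial ideal in k[x₁,…,x_d] and let c > 0 be a real number. Then there exists ε₀ > 0 such that for every ε with 0 < ε < ε₀ one has {v ∈ ℕ^d : v + 𝟏 ∈ int((c−ε)•P(𝔞))} = {v ∈ ℕ^d : v + 𝟏 ∈ c•P(𝔞)}. (The stabilization of the multiplier ideals I(𝔞^{c−ε}) for small ε > 0 at the span of the monomials with v + 𝟏 in the closed dilated Newton polyhedron, underlying the definition of the multiplicity m(c) and Lemma 5.3.) -/

import Mathlib

open Set Filter Pointwise MeasureTheory

/-- The map sending a vector of natural number exponents to the corresponding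
real vector. -/
noncomputable def expToReal (d : ℕ) (v : Fin d → ℕ) : Fin d → ℝ := fun i => (v i : ℝ)

/-- The Newton polyhedron of a monomial ideal with exponent set `S`:
the convex hull in `ℝ^d` of the exponent vectors. -/
noncomputable def newtonPoly (d : ℕ) (S : Set (Fin d → ℕ)) : Set (Fin d → ℝ) :=
  convexHull ℝ (expToReal d '' S)

/-- The multiplicity `m(c)` of `c > 0` as a (candidate) jumping number of the monomial
ideal with exponent set `S`: the number of `v ∈ ℕ^d` with `v + 𝟏` on the boundary part
`c•P(𝔞) \ int(c•P(𝔞))` of the dilated Newton polyhedron. -/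
noncomputable def multJump (d : ℕ) (S : Set (Fin d → ℕ)) (c : ℝ) : ℕ :=
  Nat.card {v : Fin d → ℕ |
    expToReal d v + 1 ∈ c • newtonPoly d S \ interior (c • newtonPoly d S)}

/-- Every vector with nonnegative coordinates is a convex combination of exponent vectors. -/
theorem mem_convexHull_range_expToReal {d : ℕ} {x : Fin d → ℝ} (hx : 0 ≤ x) :
    x ∈ convexHull ℝ (range (expToReal d)) := by
  have hrange : range (expToReal d) = univ.pi fun _ => range (Nat.cast : ℕ → ℝ) := by
    ext y
    simp only [mem_range, mem_univ_pi]
    constructor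
    · rintro ⟨v, rfl⟩ i
      exact ⟨v i, rfl⟩
    · intro h
      choose v hv using h
      exact ⟨v, funext hv⟩
  rw [hrange, convexHull_pi]
  intro i _
  obtain ⟨n, hn⟩ := exists_nat_ge (x i)
  refine segment_subset_convexHull (mem_range_self 0) (mem_range_self n) ?_
  rw [segment_eq_Icc (by simp)]
  exact ⟨by simpa using hx i, hn⟩

/-- The Newton polyhedron of a monomial ideal is stable under adding nonnegative vectors. -/
theorem isUpperSet_newtonPoly {d : ℕ} {S : Set (Fin d → ℕ)}
    (hS : ∀ v ∈ S, ∀ w : Fin d → ℕ, v + w ∈ S) : IsUpperSet (newtonPoly d S) := by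
  intro x y hxy hx
  have hsub : expToReal d '' S + range (expToReal d) ⊆ expToReal d '' S := by
    rintro _ ⟨_, ⟨v, hv, rfl⟩, _, ⟨w, rfl⟩, rfl⟩
    exact ⟨v + w, hS v hv w, by ext i; simp [expToReal]⟩
  have hadd := convexHull_mono (𝕜 := ℝ) hsub
  rw [convexHull_add] at hadd
  have hy := hadd (add_mem_add hx (mem_convexHull_range_expToReal (sub_nonneg.2 hxy)))
  rwa [add_sub_cancel] at hy

/-- A cofinite exponent set contains a common pure power of each variable. -/
theorem exists_forall_single_mem_of_finite_compl {d : ℕ} {S : Set (Fin d → ℕ)}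
    (hcof : (Sᶜ : Set (Fin d → ℕ)).Finite) :
    ∃ N : ℕ, ∀ i, Pi.single i N ∈ S := by
  obtain ⟨b, hb⟩ := hcof.bddAbove
  refine ⟨∑ j, b j + 1, fun i => ?_⟩
  by_contra h
  have hle : (Pi.single i (∑ j, b j + 1) : Fin d → ℕ) i ≤ b i := hb h i
  have hsum : b i ≤ ∑ j, b j := Finset.single_le_sum (fun _ _ => Nat.zero_le _) (Finset.mem_univ i)
  rw [Pi.single_eq_same] at hle
  omega

/-- The Newton polyhedron of a cofinite monomial ideal is closed. -/
theorem isClosed_newtonPoly {d : ℕ} {S : Set (Fin d → ℕ)}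
    (hS : ∀ v ∈ S, ∀ w : Fin d → ℕ, v + w ∈ S)
    (hcof : (Sᶜ : Set (Fin d → ℕ)).Finite) : IsClosed (newtonPoly d S) := by
  obtain ⟨N, hN⟩ := exists_forall_single_mem_of_finite_compl hcof
  let F : Set (Fin d → ℕ) := S ∩ Iic (fun _ => N)
  have hF : (expToReal d '' F).Finite := ((finite_Iic _).inter_of_right S).image _
  have heq : newtonPoly d S = convexHull ℝ (expToReal d '' F) + Ici 0 := by
    apply Subset.antisymm
    · refine convexHull_min ?_ ((convex_convexHull ℝ _).add (convex_Ici 0))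
      rintro _ ⟨v, hv, rfl⟩
      obtain ⟨w, hw, hwv⟩ : ∃ w ∈ F, w ≤ v := by
        by_cases h : ∀ i, v i ≤ N
        · exact ⟨v, ⟨hv, h⟩, le_rfl⟩
        · push Not at h
          obtain ⟨i, hi⟩ := h
          refine ⟨Pi.single i N, ⟨hN i, fun j => ?_⟩, fun j => ?_⟩ <;>
            rcases eq_or_ne j i with rfl | hj <;> simp [*, hi.le]
      refine ⟨expToReal d w, subset_convexHull ℝ _ (mem_image_of_mem _ hw),
        expToReal d v - expToReal d w, ?_, add_sub_cancel _ _⟩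
      have hle : expToReal d w ≤ expToReal d v := fun i => Nat.cast_le.2 (hwv i)
      exact sub_nonneg.2 hle
    · rintro _ ⟨p, hp, q, hq, rfl⟩
      exact isUpperSet_newtonPoly hS (le_add_of_nonneg_right hq)
        (convexHull_mono (image_mono inter_subset_left) hp)
  rw [heq]
  exact isClosed_Ici.add_left_of_isCompact (hF.isCompact_convexHull ℝ)

/-- Only finitely many shifted exponents lie outside a positive dilate of the Newton polyhedron
of a cofinite monomial ideal. -/
theorem finite_setOf_expToReal_add_one_notMem_smul_newtonPoly {d : ℕ} {S : Set (Fin d → ℕ)}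
    (hS : ∀ v ∈ S, ∀ w : Fin d → ℕ, v + w ∈ S)
    (hcof : (Sᶜ : Set (Fin d → ℕ)).Finite) {c : ℝ} (hc : 0 < c) :
    {v : Fin d → ℕ | expToReal d v + 1 ∉ c • newtonPoly d S}.Finite := by
  obtain ⟨N, hN⟩ := exists_forall_single_mem_of_finite_compl hcof
  refine (finite_Iic (fun _ : Fin d => ⌈c * N⌉₊)).subset fun v hv i => ?_
  by_contra! hi
  apply hv
  have hNv : c * N ≤ v i := (Nat.le_ceil _).trans (Nat.cast_le.2 hi.le)
  rw [mem_smul_set_iff_inv_smul_mem₀ hc.ne']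
  refine isUpperSet_newtonPoly hS (fun j => ?_)
    (subset_convexHull ℝ _ (mem_image_of_mem (expToReal d) (hN i)))
  simp only [expToReal, Pi.smul_apply, Pi.add_apply, Pi.one_apply, smul_eq_mul]
  rw [inv_mul_eq_div, le_div_iff₀' hc]
  rcases eq_or_ne j i with rfl | hj
  · rw [Pi.single_eq_same]
    linarith
  · rw [Pi.single_eq_of_ne hj, Nat.cast_zero, mul_zero]
    positivity

/-- Shrinking the dilation factor moves vectors with positive coordinates into the interior of
the dilated Newton polyhedron. -/
theorem mem_interior_smul_newtonPoly_of_lt {d : ℕ} {S : Set (Fin d → ℕ)}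
    (hS : ∀ v ∈ S, ∀ w : Fin d → ℕ, v + w ∈ S) {b c : ℝ} (hb : 0 < b) (hbc : b < c)
    {x : Fin d → ℝ} (hpos : ∀ i, 0 < x i) (hx : x ∈ c • newtonPoly d S) :
    x ∈ interior (b • newtonPoly d S) := by
  have hc : 0 < c := hb.trans hbc
  rw [mem_smul_set_iff_inv_smul_mem₀ hc.ne'] at hx
  refine mem_interior.2 ⟨univ.pi fun i => Ioi (b * (c⁻¹ * x i)), fun y hy => ?_,
    isOpen_set_pi finite_univ fun _ _ => isOpen_Ioi, fun i _ => ?_⟩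
  · rw [mem_smul_set_iff_inv_smul_mem₀ hb.ne']
    refine isUpperSet_newtonPoly hS (fun i => ?_) hx
    simp only [Pi.smul_apply, smul_eq_mul]
    rw [inv_mul_eq_div b, le_div_iff₀' hb]
    exact (hy i (mem_univ i)).le
  · rw [mem_Ioi, ← mul_assoc, ← div_eq_mul_inv]
    exact mul_lt_of_lt_one_left (hpos i) ((div_lt_one hc).2 hbc)

/-- Stabilization of the multiplier ideals `I(𝔞^{c-ε})` for small `ε > 0` (underlying the
definition of the multiplicity `m(c)` and Lemma 5.3): for a cofinite monomial ideal and
`c > 0`, for all sufficiently small `ε > 0` the set of `v` with `v + 𝟏 ∈ int((c-ε)•P(𝔞))`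
equals the set of `v` with `v + 𝟏` in the closed polyhedron `c•P(𝔞)`. -/
theorem multiplier_ideal_stabilizes_below (d : ℕ) (hd : 1 ≤ d) (k : Type*) [Field k]
    (S : Set (Fin d → ℕ)) (hS : ∀ v ∈ S, ∀ w : Fin d → ℕ, v + w ∈ S)
    (hcof : (Sᶜ : Set (Fin d → ℕ)).Finite)
    (c : ℝ) (hc : 0 < c) :
    ∃ ε₀ > 0, ∀ ε : ℝ, 0 < ε → ε < ε₀ →
      {v : Fin d → ℕ | expToReal d v + 1 ∈ interior ((c - ε) • newtonPoly d S)} =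
        {v : Fin d → ℕ | expToReal d v + 1 ∈ c • newtonPoly d S} := by
  have hev : ∀ᶠ ε in nhds (0 : ℝ), ∀ v ∈ {v : Fin d → ℕ | expToReal d v + 1 ∉ c • newtonPoly d S},
      (c - ε)⁻¹ • (expToReal d v + 1) ∉ newtonPoly d S := by
    rw [eventually_all_finite
      (finite_setOf_expToReal_add_one_notMem_smul_newtonPoly hS hcof hc)]
    intro v hv
    rw [mem_ofPred_eq, mem_smul_set_iff_inv_smul_mem₀ hc.ne'] at hv
    have hcont : ContinuousAt (fun ε : ℝ => (c - ε)⁻¹ • (expToReal d v + 1)) 0 :=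
      ((continuousAt_const.sub continuousAt_id).inv₀ (by simpa using hc.ne')).smul
        continuousAt_const
    exact hcont.eventually_mem
      ((isClosed_newtonPoly hS hcof).isOpen_compl.mem_nhds (by simpa using hv))
  obtain ⟨δ, hδ, hball⟩ := Metric.eventually_nhds_iff.1 hev
  refine ⟨min δ c, lt_min hδ hc, fun ε hε hlt => ?_⟩
  have hpos : 0 < c - ε := sub_pos.2 (hlt.trans_le (min_le_right _ _))
  have hdist : dist ε 0 < δ := by
    rw [Real.dist_0_eq_abs, abs_of_pos hε]
    exact hlt.trans_le (min_le_left _ _)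
  ext v
  constructor
  · intro hv
    by_contra hnot
    exact hball hdist v hnot
      ((mem_smul_set_iff_inv_smul_mem₀ hpos.ne' _ _).1 (interior_subset hv))
  · intro hv
    refine mem_interior_smul_newtonPoly_of_lt hS hpos (sub_lt_self c hε) (fun i => ?_) hv
    simp only [expToReal, Pi.add_apply, Pi.one_apply]
    positivity
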